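/- Let d ≥ 0 and let σ be a permutation of the set {0, 1, …, d}. For each integer m ≥ 0 let N_σ(m) be the number of functions x : {0,…,d} → ℕ with x ∘ σ = x and ∑_{i=0}^d x(i) = m (i.e. the number of σ-fixed lattice points of the m-th dilate of the standard d-simplex). Then in ℤ[[t]] one has ( ∏_{ω} (1 − t^{|ω|}) ) · ( ∑_{m ≥ 0} N_σ(m) t^m ) = 1, where the product runs over all orbits ω of σ on {0,…,d} and |ω| denotes the orbit's cardinality. (This expresses the paper's computation that the equivariant h*-series φ[t] of the standard simplex under the symmetric group S_{d+1} equals 1; equivalently, ∑_m N_σ(m) t^m = 1/((1−t)·det(I − ρ(σ)t)) with ρ the reflection representation.) -/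

import Mathlib

/-!
A function `x` with `x ∘ σ = x` is constant on the orbits of `σ`, so it is the same thing as a
function `y` on the set of orbits, and then `∑ i, x i = ∑ ω, |ω| * y ω`. Hence `N_σ(m)` is the
number of `y` of weight `m` (`card_fixed_eq`). The generating function of these weighted
compositions factors as a product of the geometric series `∑_k t^{k |ω|}`
(`mk_card_weighted_eq_prod`), each of which is inverse to `1 - t^{|ω|}`
(`one_sub_X_pow_mul_geomSeries`).
-/

/-- The geometric series `1 + t^c + t^{2c} + ⋯`, for `c > 0`. -/
noncomputable def geomSeries (c : ℕ) : PowerSeries ℤ :=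
  PowerSeries.mk fun n => if c ∣ n then 1 else 0

theorem one_sub_X_pow_mul_geomSeries {c : ℕ} (hc : 0 < c) :
    (1 - (PowerSeries.X : PowerSeries ℤ) ^ c) * geomSeries c = 1 := by
  ext n
  rw [sub_mul, one_mul, map_sub, PowerSeries.coeff_X_pow_mul', PowerSeries.coeff_one]
  simp only [geomSeries, PowerSeries.coeff_mk]
  by_cases h : c ≤ n
  · have hn : n ≠ 0 := by omega
    have hd : c ∣ n - c ↔ c ∣ n := by
      rw [← Nat.dvd_add_self_right (n := n - c), Nat.sub_add_cancel h]
    simp [h, hn, hd]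
  · rcases Nat.eq_zero_or_pos n with rfl | hn
    · simp [hc.ne']
    · have : ¬ c ∣ n := fun hd => h (Nat.le_of_dvd hn hd)
      simp [h, this, hn.ne']

/-- A solution `y` of `∑ c i * y i = m` corresponds to the decomposition of `m` into the parts
`c i * y i`, whose `i`-th part is divisible by `c i`; these index the nonzero terms in the `m`-th
coefficient of the product of geometric series. -/
theorem mk_card_weighted_eq_prod {ι : Type*} [Fintype ι] (c : ι → ℕ) (hc : ∀ i, 0 < c i) :
    PowerSeries.mk (fun m => (Nat.card {y : ι → ℕ // ∑ i, c i * y i = m} : ℤ)) =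
      ∏ i, geomSeries (c i) := by
  classical
  ext m
  rw [PowerSeries.coeff_mk, PowerSeries.coeff_prod]
  simp only [geomSeries, PowerSeries.coeff_mk, Finset.prod_ite_zero, Finset.prod_const_one,
    Finset.sum_boole, Finset.mem_univ, true_implies]
  congr 1
  rw [← Fintype.card_coe, ← Nat.card_eq_fintype_card]
  refine Nat.card_congr
    { toFun := fun y => ⟨Finsupp.equivFunOnFinite.symm fun i => c i * y.1 i, ?_⟩
      invFun := fun l => ⟨fun i => l.1 i / c i, ?_⟩
      left_inv := ?_
      right_inv := ?_ }
  · simp [Finset.mem_finsuppAntidiag, y.2]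
  · have h := l.2
    simp only [Finset.mem_filter, Finset.mem_finsuppAntidiag] at h
    exact (Finset.sum_congr rfl fun i _ => Nat.mul_div_cancel' (h.2 i)).trans h.1.1
  · intro y
    ext i
    simp [Nat.mul_div_cancel_left _ (hc i)]
  · intro l
    have h := l.2
    simp only [Finset.mem_filter] at h
    ext i
    simp [Nat.mul_div_cancel' (h.2 i)]

theorem apply_eq_of_mem_orbit {α : Type*} (σ : Equiv.Perm α) {x : α → ℕ}
    (hx : x ∘ σ = x) {a b : α} (h : a ∈ MulAction.orbit (Subgroup.zpowers σ) b) :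
    x a = x b := by
  obtain ⟨⟨g, hg⟩, rfl⟩ := h
  -- The permutations fixing `x` form a subgroup, which contains `σ` and hence its powers.
  let S : Subgroup (Equiv.Perm α) :=
    { carrier := {g | ∀ a, x (g a) = x a}
      one_mem' := fun a => rfl
      mul_mem' := fun {g h} hg hh a => (hg (h a)).trans (hh a)
      inv_mem' := fun {g} hg a => by simpa using (hg (g⁻¹ a)).symm }
  have hS : Subgroup.zpowers σ ≤ S := by
    rw [Subgroup.zpowers_le]
    exact fun a => congrFun hx a
  exact hS hg b

theorem sum_comp_mk_eq {α : Type*} [Fintype α] (σ : Equiv.Perm α)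
    [Fintype (MulAction.orbitRel.Quotient (Subgroup.zpowers σ) α)]
    (y : MulAction.orbitRel.Quotient (Subgroup.zpowers σ) α → ℕ) :
    ∑ a, y (Quotient.mk _ a) = ∑ ω, ω.orbit.ncard * y ω := by
  classical
  rw [← Finset.sum_fiberwise Finset.univ
    (fun a => (Quotient.mk _ a : MulAction.orbitRel.Quotient (Subgroup.zpowers σ) α))]
  refine Finset.sum_congr rfl fun ω _ => ?_
  rw [Finset.sum_congr rfl (g := fun _ => y ω)
    (fun a ha => by rw [(Finset.mem_filter.mp ha).2]), Finset.sum_const, smul_eq_mul]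
  congr 1
  rw [← Set.ncard_coe_finset]
  congr 1
  ext a
  simp only [Finset.coe_filter, Finset.mem_univ, true_and, Set.mem_ofPred_eq,
    MulAction.orbitRel.Quotient.mem_orbit]

theorem card_fixed_eq {α : Type*} [Fintype α] (σ : Equiv.Perm α)
    [Fintype (MulAction.orbitRel.Quotient (Subgroup.zpowers σ) α)] (m : ℕ) :
    Nat.card {x : α → ℕ // x ∘ ⇑σ = x ∧ ∑ i, x i = m} =
      Nat.card {y : MulAction.orbitRel.Quotient (Subgroup.zpowers σ) α → ℕ //
        ∑ ω, ω.orbit.ncard * y ω = m} := by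
  refine Nat.card_congr
    { toFun := fun x => ⟨fun ω => Quotient.lift x.1
        (fun a b h => apply_eq_of_mem_orbit σ x.2.1 h) ω, ?_⟩
      invFun := fun y => ⟨fun a => y.1 (Quotient.mk _ a), ?_, ?_⟩
      left_inv := fun x => rfl
      right_inv := ?_ }
  · rw [← sum_comp_mk_eq]
    exact x.2.2
  · funext a
    refine congrArg y.1 (Quotient.sound ?_)
    exact ⟨⟨σ, Subgroup.mem_zpowers σ⟩, rfl⟩
  · rw [sum_comp_mk_eq]
    exact y.2
  · intro y
    ext ω
    induction ω using Quotient.inductionOn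
    rfl

/-- Let `σ` be a permutation of `{0,…,d}` and, for `m ≥ 0`, let `N_σ(m)` be the number of
`σ`-invariant lattice points of the `m`-th dilate of the standard `d`-simplex, i.e. of
functions `x : Fin (d+1) → ℕ` with `x ∘ σ = x` and `∑ x i = m`.  Then
`(∏_ω (1 - t^{|ω|})) · ∑_m N_σ(m) t^m = 1` in `ℤ[[t]]`, the product being over the orbits
`ω` of `σ` on `{0,…,d}`. -/
theorem fixed_simplex_points_series (d : ℕ) (σ : Equiv.Perm (Fin (d + 1))) :
    letI : Fintype (MulAction.orbitRel.Quotient (Subgroup.zpowers σ) (Fin (d + 1))) :=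
      Fintype.ofFinite _
    (∏ ω : MulAction.orbitRel.Quotient (Subgroup.zpowers σ) (Fin (d + 1)),
        (1 - (PowerSeries.X : PowerSeries ℤ) ^ ω.orbit.ncard)) *
      PowerSeries.mk
        (fun m => (Nat.card {x : Fin (d + 1) → ℕ // x ∘ ⇑σ = x ∧ ∑ i, x i = m} : ℤ)) = 1 := by
  let _ : Fintype (MulAction.orbitRel.Quotient (Subgroup.zpowers σ) (Fin (d + 1))) :=
    Fintype.ofFinite _
  have hpos : ∀ ω : MulAction.orbitRel.Quotient (Subgroup.zpowers σ) (Fin (d + 1)),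
      0 < ω.orbit.ncard := fun ω =>
    (Set.ncard_pos (Set.toFinite _)).mpr
      ⟨ω.out, MulAction.orbitRel.Quotient.mem_orbit.mpr (Quotient.out_eq ω)⟩
  simp only [card_fixed_eq]
  rw [mk_card_weighted_eq_prod _ hpos, ← Finset.prod_mul_distrib]
  exact Finset.prod_eq_one fun ω _ => one_sub_X_pow_mul_geomSeries (hpos ω)
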